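/- arXiv:1812.08339 — 5 statements merged into one kernel-verified Lean document; each statement's English description precedes it below -/
import Mathlib

section
/- (Contraction of the quasi-error) Let C_rel > 0, C_est > 0 and q ∈ (0,1) be real constants, and let e, e★, E, η, η★ be nonnegative real numbers satisfying: (i) e★² ≤ e² − E² (Galerkin Pythagoras), (ii) η★² ≤ q·η² + C_est⁻¹·E² (estimator reduction), and (iii) e² ≤ C_rel·η² (reliability). Set α := (q·C_est + C_rel)/(C_est + C_rel). Then α < 1 and e★² + C_est·η★² ≤ α·(e² + C_est·η²). -/
/-!
Adding `C_est` times the estimator reduction to the Pythagoras inequality cancels `E²` and leaves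
`e² + q C_est η²`: the estimator term of the quasi-error shrinks by `q`, the error term not at all.
By reliability the estimator term is at least the fraction `C_est / (C_est + C_rel)` of the
quasi-error, so the whole shrinks by the factor `1 - (1 - q) C_est / (C_est + C_rel) = α`.
-/

lemma mul_add_div_add_eq_one_sub {F : Type*} [Field F] {c r : F} (q : F) (hcr : c + r ≠ 0) :
    (q * c + r) / (c + r) = 1 - (1 - q) * (c / (c + r)) := by
  field_simp
  ring

section OrderedField

variable {K : Type*} [Field K] [LinearOrder K] [IsStrictOrderedRing K] {a a' b b' c d q r x : K}

lemma add_mul_le_add_mul_of_le_sub_of_le_add_inv_mul (hc : 0 < c) (ha : a' ≤ a - d)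
    (hb : b' ≤ x + c⁻¹ * d) : a' + c * b' ≤ a + c * x :=
  calc
    a' + c * b' ≤ (a - d) + c * (x + c⁻¹ * d) := by gcongr
    _ = a + c * x := by rw [mul_add, mul_inv_cancel_left₀ hc.ne']; ring

lemma div_add_mul_add_mul_le_mul (hc : 0 ≤ c) (hcr : 0 < c + r) (hab : a ≤ r * b) :
    c / (c + r) * (a + c * b) ≤ c * b :=
  calc
    c / (c + r) * (a + c * b) ≤ c / (c + r) * (r * b + c * b) := by gcongr
    _ = c / (c + r) * (c + r) * b := by ring
    _ = c * b := by rw [div_mul_cancel₀ c hcr.ne']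

/-- The variables `a`, `a'`, `d`, `b`, `b'` stand for the squares `e²`, `e★²`, `E²`, `η²`, `η★²`,
and `c`, `r` for the constants `C_est`, `C_rel`. -/
theorem quasi_error_contraction_general (hc : 0 < c) (hcr : 0 < c + r) (hq : q < 1)
    (hPyth : a' ≤ a - d) (hEst : b' ≤ q * b + c⁻¹ * d) (hRel : a ≤ r * b) :
    (q * c + r) / (c + r) < 1 ∧
      a' + c * b' ≤ (q * c + r) / (c + r) * (a + c * b) := by
  have hq' : 0 < 1 - q := sub_pos.2 hq
  rw [mul_add_div_add_eq_one_sub q hcr.ne']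
  refine ⟨sub_lt_self 1 (mul_pos hq' (div_pos hc hcr)), ?_⟩
  calc
    a' + c * b' ≤ a + c * (q * b) :=
      add_mul_le_add_mul_of_le_sub_of_le_add_inv_mul hc hPyth hEst
    _ = (a + c * b) - (1 - q) * (c * b) := by ring
    _ ≤ (a + c * b) - (1 - q) * (c / (c + r) * (a + c * b)) :=
      sub_le_sub_left
        (mul_le_mul_of_nonneg_left (div_add_mul_add_mul_le_mul hc.le hcr hRel) hq'.le) _
    _ = (1 - (1 - q) * (c / (c + r))) * (a + c * b) := by ring

end OrderedField

/-- **Contraction of the quasi-error.**  Arithmetic core of the AFEM convergence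
theorem: given reliability, estimator reduction and Galerkin Pythagoras, the
quasi-error `e² + C_est·η²` contracts with factor
`α = (q·C_est + C_rel)/(C_est + C_rel) < 1`. -/
theorem quasi_error_contraction
    (Crel Cest q : ℝ) (hCrel : 0 < Crel) (hCest : 0 < Cest)
    (hq0 : 0 < q) (hq1 : q < 1)
    (e es E η ηs : ℝ)
    (he : 0 ≤ e) (hes : 0 ≤ es) (hE : 0 ≤ E) (hη : 0 ≤ η) (hηs : 0 ≤ ηs)
    (hPyth : es ^ 2 ≤ e ^ 2 - E ^ 2)
    (hEst : ηs ^ 2 ≤ q * η ^ 2 + Cest⁻¹ * E ^ 2)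
    (hRel : e ^ 2 ≤ Crel * η ^ 2) :
    (q * Cest + Crel) / (Cest + Crel) < 1 ∧
      es ^ 2 + Cest * ηs ^ 2 ≤
        (q * Cest + Crel) / (Cest + Crel) * (e ^ 2 + Cest * η ^ 2) :=
  quasi_error_contraction_general hCest (add_pos hCest hCrel) hq1 hPyth hEst hRel
end

section
/- (Discrete trace inequality for polynomials, with scaling) Fix a natural number m. There exists a constant d > 0, depending only on m, such that for every real h > 0 and every real polynomial q in two variables of total degree at most m, ∫_0^h q(x,0)² dx ≤ d · h⁻¹ · ∫_{[0,h]²} q(x,y)² d(x,y). -/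
open MeasureTheory

/-!
Fix the variable along the edge. On each transversal segment, evaluation at an endpoint is a linear
functional on the finite-dimensional space of polynomials of degree at most `m`, hence is bounded by
the `L²` norm; an affine change of variable multiplies the constant by the inverse length.
Integrating these pointwise bounds along the edge gives the trace estimate.
-/

open Polynomial

theorem exists_norm_le_mul_norm_of_injective {𝕜 V E F : Type*} [NontriviallyNormedField 𝕜]
    [CompleteSpace 𝕜] [AddCommGroup V] [Module 𝕜 V] [FiniteDimensional 𝕜 V]
    [NormedAddCommGroup E] [NormedSpace 𝕜 E] [SeminormedAddCommGroup F] [NormedSpace 𝕜 F]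
    {T : V →ₗ[𝕜] E} (hT : Function.Injective T) (ℓ : V →ₗ[𝕜] F) :
    ∃ C : ℝ, 0 < C ∧ ∀ v, ‖ℓ v‖ ≤ C * ‖T v‖ := by
  let e : V ≃ₗ[𝕜] LinearMap.range T := LinearEquiv.ofInjective T hT
  let L : LinearMap.range T →L[𝕜] F := (ℓ ∘ₗ e.symm.toLinearMap).toContinuousLinearMap
  obtain ⟨C, hC, hL⟩ := L.bound
  refine ⟨C, hC, fun v => ?_⟩
  simpa [L, e] using hL (e v)

section PolynomialL2

variable {μ : Measure ℝ}

/-- The map sending a real polynomial to its class in `L²(μ)`, for a measure `μ` with respect to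
which every polynomial is square integrable. -/
noncomputable def polynomialToL2 (hμ : ∀ p : ℝ[X], MemLp p.eval 2 μ) : ℝ[X] →ₗ[ℝ] Lp ℝ 2 μ where
  toFun p := (hμ p).toLp
  map_add' p q := by
    rw [← MemLp.toLp_add]
    exact MemLp.toLp_congr _ _ (.of_forall fun _ => eval_add)
  map_smul' c p := by
    rw [RingHom.id_apply, ← MemLp.toLp_const_smul]
    exact MemLp.toLp_congr _ _ (.of_forall fun x => eval_smul c p x)

theorem coeFn_polynomialToL2 (hμ : ∀ p : ℝ[X], MemLp p.eval 2 μ) (p : ℝ[X]) :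
    polynomialToL2 hμ p =ᵐ[μ] p.eval :=
  (hμ p).coeFn_toLp

theorem norm_polynomialToL2_sq (hμ : ∀ p : ℝ[X], MemLp p.eval 2 μ) (p : ℝ[X]) :
    ‖polynomialToL2 hμ p‖ ^ 2 = ∫ x, p.eval x ^ 2 ∂μ := by
  rw [← real_inner_self_eq_norm_sq, L2.inner_def]
  refine integral_congr_ae ?_
  filter_upwards [coeFn_polynomialToL2 hμ p] with x hx
  rw [hx, real_inner_self_eq_norm_sq, Real.norm_eq_abs, sq_abs]

theorem polynomialToL2_injective [NullSingletonClass μ] [NeZero μ]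
    (hμ : ∀ p : ℝ[X], MemLp p.eval 2 μ) : Function.Injective (polynomialToL2 hμ) := by
  rw [injective_iff_map_eq_zero]
  intro p hp
  have hae : ∀ᵐ x ∂μ, p.IsRoot x :=
    (coeFn_polynomialToL2 hμ p).symm.trans (Lp.eq_zero_iff_ae_eq_zero.1 hp)
  by_contra hp0
  have hroots : ∀ᵐ x ∂μ, ¬p.IsRoot x :=
    measure_eq_zero_iff_ae_notMem.1 ((finite_setOfPred_isRoot hp0).measure_zero μ)
  obtain ⟨x, hx, hnx⟩ := (hae.and hroots).exists
  exact hnx hx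

theorem exists_norm_sq_le_mul_integral_eval_sq [NullSingletonClass μ] [NeZero μ]
    (hμ : ∀ p : ℝ[X], MemLp p.eval 2 μ) {F : Type*} [SeminormedAddCommGroup F] [NormedSpace ℝ F]
    (ℓ : ℝ[X] →ₗ[ℝ] F) (m : ℕ) :
    ∃ C : ℝ, 0 < C ∧ ∀ p : ℝ[X], p.natDegree ≤ m → ‖ℓ p‖ ^ 2 ≤ C * ∫ x, p.eval x ^ 2 ∂μ := by
  let V := degreeLT ℝ (m + 1)
  have : FiniteDimensional ℝ V := Module.Finite.equiv (degreeLTEquiv ℝ (m + 1)).symm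
  have hinj : Function.Injective (polynomialToL2 hμ ∘ₗ V.subtype) :=
    (polynomialToL2_injective hμ).comp V.injective_subtype
  obtain ⟨C, hC, hbound⟩ := exists_norm_le_mul_norm_of_injective hinj (ℓ ∘ₗ V.subtype)
  refine ⟨C ^ 2, pow_pos hC 2, fun p hp => ?_⟩
  have hpV : p ∈ V := mem_degreeLT.2
    ((degree_le_of_natDegree_le hp).trans_lt (Nat.cast_lt.2 m.lt_succ_self))
  calc ‖ℓ p‖ ^ 2 ≤ (C * ‖polynomialToL2 hμ p‖) ^ 2 := by gcongr; exact hbound ⟨p, hpV⟩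
    _ = C ^ 2 * ∫ x, p.eval x ^ 2 ∂μ := by rw [mul_pow, norm_polynomialToL2_sq]

end PolynomialL2

theorem memLp_two_restrict_of_continuousOn {X : Type*} [TopologicalSpace X] [T2Space X]
    [MeasurableSpace X] [OpensMeasurableSpace X] {μ : Measure X} [IsFiniteMeasureOnCompacts μ]
    {K : Set X} (hK : IsCompact K) {f : X → ℝ} (hf : ContinuousOn f K) :
    MemLp f 2 (μ.restrict K) :=
  (memLp_two_iff_integrable_sq (hf.aestronglyMeasurable_of_isCompact hK
    hK.measurableSet)).2 ((hf.pow 2).integrableOn_compact hK)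

theorem exists_sq_eval_left_le_mul_integral (m : ℕ) :
    ∃ d : ℝ, 0 < d ∧ ∀ p : ℝ[X], p.natDegree ≤ m → ∀ a b : ℝ, a < b →
      p.eval a ^ 2 ≤ d * (b - a)⁻¹ * ∫ y in Set.Icc a b, p.eval y ^ 2 := by
  have : NeZero (volume.restrict (Set.Icc (0 : ℝ) 1)) := ⟨by simp⟩
  obtain ⟨d, hd, hunit⟩ := exists_norm_sq_le_mul_integral_eval_sq
    (μ := volume.restrict (Set.Icc 0 1))
    (fun p => memLp_two_restrict_of_continuousOn isCompact_Icc p.continuousOn) (leval (0 : ℝ)) m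
  refine ⟨d, hd, fun p hp a b hab => ?_⟩
  let A : ℝ[X] := C (b - a) * X + C a
  have hdeg : (p.comp A).natDegree ≤ m :=
    calc (p.comp A).natDegree ≤ p.natDegree * A.natDegree := natDegree_comp_le
      _ ≤ p.natDegree * 1 := by gcongr; exact natDegree_linear_le
      _ ≤ m := by rwa [mul_one]
  have hA (y : ℝ) : (p.comp A).eval y = p.eval ((b - a) * y + a) := by simp [A]
  have hscale : ∫ y in Set.Icc (0 : ℝ) 1, (p.comp A).eval y ^ 2 =
      (b - a)⁻¹ * ∫ y in Set.Icc a b, p.eval y ^ 2 := by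
    simp only [hA, integral_Icc_eq_integral_Ioc, ← intervalIntegral.integral_of_le zero_le_one,
      ← intervalIntegral.integral_of_le hab.le]
    simpa using intervalIntegral.integral_comp_mul_add (a := 0) (b := 1) (fun y => p.eval y ^ 2)
      (sub_ne_zero.2 hab.ne') a
  calc p.eval a ^ 2 = ‖leval (0 : ℝ) (p.comp A)‖ ^ 2 := by simp [hA]
    _ ≤ d * ∫ y in Set.Icc (0 : ℝ) 1, (p.comp A).eval y ^ 2 := hunit _ hdeg
    _ = d * (b - a)⁻¹ * ∫ y in Set.Icc a b, p.eval y ^ 2 := by rw [hscale, mul_assoc]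

section CoordSlice

variable {R σ : Type*} [CommSemiring R] [DecidableEq σ]

/-- The restriction of a multivariate polynomial to the line through `x` in the direction of the
`i`-th coordinate, as a univariate polynomial in that coordinate. The value `x i` is irrelevant. -/
noncomputable def coordSlice (i : σ) (x : σ → R) (q : MvPolynomial σ R) : R[X] :=
  MvPolynomial.aeval (Function.update (fun j => C (x j)) i X) q

theorem eval_coordSlice (i : σ) (x : σ → R) (q : MvPolynomial σ R) (y : R) :
    (coordSlice i x q).eval y = MvPolynomial.eval (Function.update x i y) q := by
  rw [coordSlice, MvPolynomial.aeval_def, MvPolynomial.polynomial_eval_eval₂]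
  congr 2
  · ext r
    simp
  · ext j
    rcases eq_or_ne j i with rfl | hj <;> simp [*]

theorem natDegree_coordSlice_le (i : σ) (x : σ → R) (q : MvPolynomial σ R) :
    (coordSlice i x q).natDegree ≤ q.degreeOf i := by
  have hcoord (j : σ) : (Function.update (fun j => C (x j)) i X j).natDegree ≤
      if j = i then 1 else 0 := by
    rcases eq_or_ne j i with rfl | hj <;> simp [*, natDegree_X_le]
  rw [coordSlice, MvPolynomial.aeval_def, MvPolynomial.eval₂_eq]
  refine natDegree_sum_le_of_forall_le _ _ fun s hs => ?_
  refine (natDegree_C_mul_le _ _).trans ?_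
  calc (∏ j ∈ s.support, Function.update (fun j => C (x j)) i X j ^ s j).natDegree
      ≤ ∑ j ∈ s.support, (Function.update (fun j => C (x j)) i X j ^ s j).natDegree :=
        natDegree_prod_le _ _
    _ ≤ ∑ j ∈ s.support, s j * if j = i then 1 else 0 := by
        gcongr with j
        exact natDegree_pow_le_of_le _ (hcoord j)
    _ ≤ s i := by
        simp only [mul_ite, mul_one, mul_zero, Finset.sum_ite_eq']
        split_ifs <;> simp
    _ ≤ q.degreeOf i := MvPolynomial.monomial_le_degreeOf i hs

end CoordSlice

theorem integral_le_mul_integral_prod {X Y : Type*} [MeasurableSpace X] [MeasurableSpace Y]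
    {μ : Measure X} {ν : Measure Y} [SFinite μ] [SFinite ν] {f : X → ℝ} {g : X × Y → ℝ} {c : ℝ}
    (hf : Integrable f μ) (hg : Integrable g (μ.prod ν))
    (hfg : ∀ᵐ x ∂μ, f x ≤ c * ∫ y, g (x, y) ∂ν) :
    ∫ x, f x ∂μ ≤ c * ∫ z, g z ∂μ.prod ν :=
  calc ∫ x, f x ∂μ ≤ ∫ x, c * ∫ y, g (x, y) ∂ν ∂μ :=
        integral_mono_ae hf (hg.integral_prod_left.const_mul c) hfg
    _ = c * ∫ z, g z ∂μ.prod ν := by rw [integral_const_mul, integral_prod g hg]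

theorem discrete_trace_inequality_general (m : ℕ) :
    ∃ d : ℝ, 0 < d ∧ ∀ q : MvPolynomial (Fin 2) ℝ, q.degreeOf 1 ≤ m →
      ∀ K : Set ℝ, IsCompact K → ∀ a b : ℝ, a < b →
        ∫ x in K, MvPolynomial.eval ![x, a] q ^ 2 ≤
          d * (b - a)⁻¹ * ∫ p in K ×ˢ Set.Icc a b, MvPolynomial.eval ![p.1, p.2] q ^ 2 := by
  obtain ⟨d, hd, hsegment⟩ := exists_sq_eval_left_le_mul_integral m
  refine ⟨d, hd, fun q hq K hK a b hab => ?_⟩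
  have hcont : Continuous fun p : ℝ × ℝ => MvPolynomial.eval ![p.1, p.2] q ^ 2 := by
    have := q.continuous_eval
    fun_prop
  have hslice (x y : ℝ) :
      (coordSlice 1 ![x, 0] q).eval y = MvPolynomial.eval ![x, y] q := by
    rw [eval_coordSlice]
    congr 2
    ext j
    fin_cases j <;> rfl
  have hedge : IntegrableOn (fun x => MvPolynomial.eval ![x, a] q ^ 2) K :=
    (hcont.comp (.prodMk_left a)).continuousOn.integrableOn_compact hK
  have hcell : IntegrableOn (fun p : ℝ × ℝ => MvPolynomial.eval ![p.1, p.2] q ^ 2)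
      (K ×ˢ Set.Icc a b) := hcont.continuousOn.integrableOn_compact (hK.prod isCompact_Icc)
  rw [IntegrableOn, Measure.volume_eq_prod, ← Measure.prod_restrict] at hcell
  rw [Measure.volume_eq_prod, ← Measure.prod_restrict]
  refine integral_le_mul_integral_prod hedge hcell (.of_forall fun x => ?_)
  simpa only [hslice] using
    hsegment (coordSlice 1 ![x, 0] q) ((natDegree_coordSlice_le _ _ _).trans hq) a b hab

/-- **Discrete trace inequality for polynomials, with scaling.**  There is a
constant `d > 0`, depending only on `m`, such that for every `h > 0` and every
bivariate real polynomial `q` of total degree at most `m`,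
`∫_0^h q(x,0)² dx ≤ d · h⁻¹ · ∫_{[0,h]²} q²`. -/
theorem discrete_trace_inequality (m : ℕ) :
    ∃ d : ℝ, 0 < d ∧ ∀ h : ℝ, 0 < h → ∀ q : MvPolynomial (Fin 2) ℝ,
      q.totalDegree ≤ m →
      (∫ x in Set.Icc (0:ℝ) h, (MvPolynomial.eval ![x, 0] q) ^ 2)
        ≤ d * h⁻¹ * ∫ p in Set.Icc (0:ℝ) h ×ˢ Set.Icc (0:ℝ) h,
            (MvPolynomial.eval ![p.1, p.2] q) ^ 2 := by
  obtain ⟨d, hd, htrace⟩ := discrete_trace_inequality_general m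
  refine ⟨d, hd, fun h hh q hq => ?_⟩
  simpa only [sub_zero] using
    htrace q ((q.degreeOf_le_totalDegree 1).trans hq) (Set.Icc 0 h) isCompact_Icc 0 h hh
end

section
/- (Partition of unity for cardinal B-splines) For every natural number k and every x ∈ ℝ, the integer translates of the cardinal B-spline b^k sum to one: ∑_{j ∈ ℤ} b^k(x − j) = 1 (the sum has only finitely many nonzero terms). -/
open MeasureTheory

/-- The cardinal B-spline of degree `k`, defined recursively by
`b⁰ = 1_{[0,1)}` and `b^k(x) = ∫₀¹ b^{k-1}(x - t) dt`. -/
noncomputable def cardB : ℕ → ℝ → ℝ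
  | 0 => Set.indicator (Set.Ico (0:ℝ) 1) (fun _ => (1:ℝ))
  | k + 1 => fun x => ∫ t in (0:ℝ)..1, cardB k (x - t)

/-!
The recursion says `b^{k+1} = b⁰ ⋆ b^k`, so every `b^k` is integrable, compactly supported and of
integral one. As `j` runs over `ℤ`, the translates `b^{k+1}(x - j)` are the integrals of
`t ↦ b^k(x - t)` over the intervals `[j, j + 1]`, which tile the line; hence they sum to
`∫ b^k = 1`.
-/

open scoped Convolution

theorem finite_setOf_apply_sub_intCast_ne_zero {E : Type*} [Zero E] {f : ℝ → E}
    (hf : HasCompactSupport f) (x : ℝ) : {j : ℤ | f (x - j) ≠ 0}.Finite := by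
  have hcompact : IsCompact (tsupport fun t => f (x - t)) :=
    hf.comp_homeomorph (Homeomorph.subLeft x)
  have hfinite : (((↑) : ℤ → ℝ) ⁻¹' tsupport fun t => f (x - t)).Finite := by
    simpa only [Filter.mem_map, Filter.mem_cofinite, Set.preimage_compl, compl_compl] using
      Int.tendsto_coe_cofinite hcompact.compl_mem_cocompact
  exact hfinite.subset fun j hj => subset_tsupport (fun t => f (x - t)) hj

section

variable {E : Type*} [NormedAddCommGroup E] [NormedSpace ℝ E]

theorem indicator_Ico_one_convolution {a b : ℝ} (hab : a ≤ b) (f : ℝ → E) (x : ℝ) :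
    ((Set.Ico a b).indicator (fun _ => (1 : ℝ)) ⋆ f) x = ∫ t in a..b, f (x - t) := by
  simp only [convolution_lsmul, ← Set.indicator_smul_apply_left (f := fun t => f (x - t)),
    one_smul]
  rw [integral_indicator measurableSet_Ico, integral_Ico_eq_integral_Ioc,
    intervalIntegral.integral_of_le hab]

theorem hasSum_intervalIntegral_sub_intCast {f : ℝ → E} (hf : Integrable f) (x : ℝ) :
    HasSum (fun j : ℤ => ∫ t in (0 : ℝ)..1, f (x - j - t)) (∫ t, f t) := by
  simpa only [integral_sub_left_eq_self, sub_sub, add_comm] using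
    (hf.comp_sub_left x).hasSum_intervalIntegral_comp_add_int

end

theorem cardB_succ_eq_convolution (k : ℕ) : cardB (k + 1) = cardB 0 ⋆ cardB k :=
  funext fun x => (indicator_Ico_one_convolution zero_le_one (cardB k) x).symm

theorem hasCompactSupport_cardB (k : ℕ) : HasCompactSupport (cardB k) := by
  have hzero : HasCompactSupport (cardB 0) :=
    .of_support_subset_isCompact isCompact_Icc
      (Set.support_indicator_subset.trans Set.Ico_subset_Icc_self)
  induction k with
  | zero => exact hzero
  | succ k ih => exact cardB_succ_eq_convolution k ▸ hzero.convolution _ ih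

theorem integrable_cardB (k : ℕ) : Integrable (cardB k) := by
  have hzero : Integrable (cardB 0) :=
    (integrable_indicator_iff measurableSet_Ico).2 (integrableOn_const (by simp))
  induction k with
  | zero => exact hzero
  | succ k ih => exact cardB_succ_eq_convolution k ▸ hzero.integrable_convolution _ ih

theorem integral_cardB (k : ℕ) : ∫ x, cardB k x = 1 := by
  have hzero : ∫ x, cardB 0 x = 1 := by
    simp [cardB, integral_indicator measurableSet_Ico]
  induction k with
  | zero => exact hzero
  | succ k ih =>
    rw [cardB_succ_eq_convolution, integral_convolution _ (integrable_cardB 0) (integrable_cardB k),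
      hzero, ih, ContinuousLinearMap.lsmul_apply, one_smul]

theorem cardB_zero_sub_intCast (x : ℝ) (j : ℤ) :
    cardB 0 (x - j) = if j = ⌊x⌋ then 1 else 0 := by
  have hmem : x - j ∈ Set.Ico (0 : ℝ) 1 ↔ j = ⌊x⌋ := by
    rw [Set.mem_Ico, sub_nonneg, sub_lt_iff_lt_add', eq_comm, Int.floor_eq_iff]
  simp only [cardB, Set.indicator_apply, hmem]

theorem hasSum_cardB_sub_intCast (k : ℕ) (x : ℝ) : HasSum (fun j : ℤ => cardB k (x - j)) 1 := by
  cases k with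
  | zero => simpa only [cardB_zero_sub_intCast] using hasSum_ite_eq ⌊x⌋ (1 : ℝ)
  | succ k =>
    simpa only [cardB, integral_cardB] using
      hasSum_intervalIntegral_sub_intCast (integrable_cardB k) x

/-- **Partition of unity for cardinal B-splines.**  For every `k` and every
`x ∈ ℝ`, only finitely many integer translates `b^k(x - j)` are nonzero and
they sum to one: `∑_{j ∈ ℤ} b^k(x - j) = 1`. -/
theorem cardB_partition_of_unity (k : ℕ) (x : ℝ) :
    {j : ℤ | cardB k (x - j) ≠ 0}.Finite ∧
      (∑' j : ℤ, cardB k (x - j)) = 1 :=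
  ⟨finite_setOf_apply_sub_intCast_ne_zero (hasCompactSupport_cardB k) x,
    (hasSum_cardB_sub_intCast k x).tsum_eq⟩
end

section
/- (Smoothness of cardinal B-splines) For every natural number k ≥ 1, the cardinal B-spline b^k is (k−1)-times continuously differentiable on ℝ. -/
open MeasureTheory

/-!
Averaging over a sliding window is a difference of two translates of a primitive,
`∫ t in a..b, f (x - t) = F (x - a) - F (x - b)` with `F' = f`. It therefore turns a locally
integrable function into a continuous one and a `C^n` function into a `C^(n+1)` one.
-/

section SlidingWindow

variable {E : Type*} [NormedAddCommGroup E] [NormedSpace ℝ E] {f : ℝ → E}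

lemma integral_comp_sub_left_eq_primitive_sub_primitive
    (hf : ∀ a b : ℝ, IntervalIntegrable f volume a b) (a b c x : ℝ) :
    ∫ t in a..b, f (x - t) = (∫ t in c..x - a, f t) - ∫ t in c..x - b, f t := by
  rw [intervalIntegral.integral_comp_sub_left,
    intervalIntegral.integral_interval_sub_left (hf _ _) (hf _ _)]

lemma continuous_integral_comp_sub_left
    (hf : ∀ a b : ℝ, IntervalIntegrable f volume a b) (a b : ℝ) :
    Continuous fun x => ∫ t in a..b, f (x - t) := by
  simp only [integral_comp_sub_left_eq_primitive_sub_primitive hf a b 0]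
  have hF : Continuous fun x => ∫ t in (0:ℝ)..x, f t :=
    intervalIntegral.continuous_primitive hf 0
  exact (hF.comp (continuous_sub_right a)).sub (hF.comp (continuous_sub_right b))

variable [CompleteSpace E] {n : ℕ∞}

lemma contDiff_primitive (hf : ContDiff ℝ n f) (a : ℝ) :
    ContDiff ℝ (n + 1) fun x => ∫ t in a..x, f t := by
  have hderiv (x : ℝ) : HasDerivAt (fun x => ∫ t in a..x, f t) (f x) x :=
    (hf.continuous.integral_hasStrictDerivAt a x).hasDerivAt
  refine contDiff_succ_iff_deriv.2 ⟨fun x => (hderiv x).differentiableAt, by simp, ?_⟩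
  rwa [deriv_eq hderiv]

lemma contDiff_integral_comp_sub_left (hf : ContDiff ℝ n f) (a b : ℝ) :
    ContDiff ℝ (n + 1) fun x => ∫ t in a..b, f (x - t) := by
  simp only [integral_comp_sub_left_eq_primitive_sub_primitive
    (fun _ _ => hf.continuous.intervalIntegrable _ _) a b 0]
  have hF : ContDiff ℝ (n + 1) fun x => ∫ t in (0:ℝ)..x, f t := contDiff_primitive hf 0
  exact (hF.comp (contDiff_id.sub contDiff_const)).sub (hF.comp (contDiff_id.sub contDiff_const))

end SlidingWindow

lemma integrable_cardB_zero : Integrable (cardB 0) :=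
  (integrableOn_const measure_Ico_lt_top.ne).integrable_indicator measurableSet_Ico

lemma continuous_cardB_one : Continuous (cardB 1) :=
  continuous_integral_comp_sub_left (fun _ _ => integrable_cardB_zero.intervalIntegrable) 0 1

lemma contDiff_cardB_succ (k : ℕ) : ContDiff ℝ (k : ℕ∞) (cardB (k + 1)) := by
  induction k with
  | zero => exact contDiff_zero.2 continuous_cardB_one
  | succ k ih => exact_mod_cast contDiff_integral_comp_sub_left ih 0 1

/-- **Smoothness of cardinal B-splines.**  For every `k ≥ 1`, the cardinal
B-spline `b^k` is `(k-1)`-times continuously differentiable on `ℝ`. -/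
theorem cardB_contDiff (k : ℕ) (hk : 1 ≤ k) :
    ContDiff ℝ ((k - 1 : ℕ) : ℕ∞) (cardB k) := by
  obtain ⟨n, rfl⟩ := Nat.exists_eq_add_of_le' hk
  exact contDiff_cardB_succ n
end

section
/- (Functions with vanishing m-th differences are polynomials) Let m ≥ 1 be a natural number and let f : ℝ → ℝ be continuous. If (Δ_h^m f)(x) = 0 for every h > 0 and every x ∈ ℝ, then f coincides with a real polynomial of degree at most m − 1. -/
/-- The forward difference operator `(Δ_h f)(x) = f (x + h) - f x`. -/
def fwdDiffOp (h : ℝ) (f : ℝ → ℝ) : ℝ → ℝ := fun x => f (x + h) - f x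

/-!
If `Δ_h^m f = 0`, Newton's forward difference formula stops before order `m`, so `n ↦ f (y + n h)`
is a polynomial in `n` of degree less than `m`. Let `p` be the polynomial that `f` follows on `ℕ`.
For a rational `r` of denominator `N`, the progression `r, r + 1/N, r + 2/N, …` meets `ℕ` infinitely
often; the polynomial that `f` follows along this progression therefore agrees with `p` infinitely
often, so it is `p`, and `f r = p r`. Density of `ℚ` concludes.
-/

open Polynomial

section AddCommGroup

variable {M G : Type*} [AddCommMonoid M] [AddCommGroup G] {h : M} {f : M → G} {m : ℕ}

lemma fwdDiff_iter_eq_zero_of_le (hf : (fwdDiff h)^[m] f = 0) {k : ℕ} (hmk : m ≤ k) :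
    (fwdDiff h)^[k] f = 0 := by
  obtain ⟨d, rfl⟩ := Nat.exists_eq_add_of_le' hmk
  rw [Function.iterate_add_apply, hf]
  exact Function.iterate_fixed (fwdDiff_const h 0) d

lemma apply_add_nsmul_eq_sum_of_fwdDiff_iter_eq_zero (hf : (fwdDiff h)^[m] f = 0) (y : M) (n : ℕ) :
    f (y + n • h) = ∑ k ∈ Finset.range m, n.choose k • (fwdDiff h)^[k] f y := by
  have vanish_of_not_lt_m (k : ℕ) (hk : k ∉ Finset.range m) :
      n.choose k • (fwdDiff h)^[k] f y = 0 := by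
    rw [fwdDiff_iter_eq_zero_of_le hf (not_lt.mp (Finset.mem_range.not.mp hk)), Pi.zero_apply,
      smul_zero]
  have vanish_of_not_le_n (k : ℕ) (hk : k ∉ Finset.range (n + 1)) :
      n.choose k • (fwdDiff h)^[k] f y = 0 := by
    rw [Nat.choose_eq_zero_of_lt (not_lt.mp (Finset.mem_range.not.mp hk)), zero_smul]
  rw [shift_eq_sum_fwdDiff_iter h f n y]
  exact Finset.sum_congr_of_eq_on_inter (fun k _ => vanish_of_not_lt_m k)
    (fun k _ => vanish_of_not_le_n k) (fun _ _ _ => rfl)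

end AddCommGroup

section Field

variable {K : Type*} [Field K]

/-- The Newton interpolation polynomial `∑ k < m, a k * (X choose k)` at the nodes `0, 1, …, m - 1`,
where `a k` plays the role of the `k`-th forward difference at `0`. The binomial coefficient
`X choose k` is encoded as the falling factorial of order `k` divided by `k!`. -/
noncomputable def newtonPolynomial (a : ℕ → K) (m : ℕ) : K[X] :=
  ∑ k ∈ Finset.range m, (a k / k.factorial) • descPochhammer K k

lemma degree_newtonPolynomial_lt (a : ℕ → K) (m : ℕ) : (newtonPolynomial a m).degree < m := by
  rw [← mem_degreeLT]
  refine Submodule.sum_mem _ fun k hk => Submodule.smul_mem _ _ (mem_degreeLT.mpr ?_)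
  rw [degree_eq_natDegree (monic_descPochhammer K k).ne_zero, descPochhammer_natDegree]
  exact_mod_cast Finset.mem_range.mp hk

lemma eval_natCast_newtonPolynomial [CharZero K] (a : ℕ → K) (m n : ℕ) :
    (newtonPolynomial a m).eval (n : K) = ∑ k ∈ Finset.range m, n.choose k • a k := by
  rw [newtonPolynomial, eval_finsetSum]
  refine Finset.sum_congr rfl fun k _ => ?_
  rw [eval_smul, smul_eq_mul, nsmul_eq_mul, Nat.cast_choose_eq_descPochhammer_div]
  ring

variable [CharZero K] {m : ℕ}

lemma exists_degree_lt_forall_apply_add_nsmul_eq_eval {M : Type*} [AddCommMonoid M] {h : M}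
    {f : M → K} (hf : (fwdDiff h)^[m] f = 0) (y : M) :
    ∃ q : K[X], q.degree < m ∧ ∀ n : ℕ, f (y + n • h) = q.eval (n : K) :=
  ⟨newtonPolynomial (fun k => (fwdDiff h)^[k] f y) m, degree_newtonPolynomial_lt _ m, fun n => by
    rw [eval_natCast_newtonPolynomial, apply_add_nsmul_eq_sum_of_fwdDiff_iter_eq_zero hf]⟩

variable {f : K → K} {p : K[X]}

lemma apply_eq_eval_of_infinite_of_fwdDiff_iter_eq_zero {h y : K} (hf : (fwdDiff h)^[m] f = 0)
    (hp : {n : ℕ | f (y + n • h) = p.eval (y + n • h)}.Infinite) : f y = p.eval y := by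
  obtain ⟨q, -, hq⟩ := exists_degree_lt_forall_apply_add_nsmul_eq_eval hf y
  have q_eq : q = p.comp (C y + X * C h) := by
    refine eq_of_infinite_eval_eq _ _ ((hp.image Nat.cast_injective.injOn).mono ?_)
    rintro _ ⟨n, hn, rfl⟩
    have eval_q : q.eval (n : K) = p.eval (y + n • h) := (hq n).symm.trans hn
    simpa only [Set.mem_ofPred_eq, eval_comp, eval_add, eval_mul, eval_C, eval_X, nsmul_eq_mul]
      using eval_q
  simpa [q_eq] using hq 0

lemma apply_ratCast_eq_eval_of_fwdDiff_iter_eq_zero {r : ℚ} (hf : (fwdDiff (r.den : K)⁻¹)^[m] f = 0)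
    (hp : ∀ n : ℕ, f n = p.eval (n : K)) : f r = p.eval (r : K) := by
  refine apply_eq_eval_of_infinite_of_fwdDiff_iter_eq_zero hf
    (Set.infinite_of_forall_exists_gt fun a => ?_)
  -- `r + n / r.den` is the natural number `l` when `n = l * r.den - r.num`.
  set l : ℕ := a + r.num.natAbs + 1
  have l_le : (l : ℤ) ≤ l * r.den := le_mul_of_one_le_right l.cast_nonneg (mod_cast r.den_pos)
  obtain ⟨n, hn⟩ := Int.eq_ofNat_of_zero_le (a := l * r.den - r.num) (by omega)
  have progression_eq : (r : K) + n • (r.den : K)⁻¹ = l := by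
    have den_ne : (r.den : K) ≠ 0 := mod_cast r.den_ne_zero
    have n_eq : (n : K) = l * r.den - r.num := mod_cast hn.symm
    rw [nsmul_eq_mul, n_eq, Rat.cast_def]
    field_simp
    ring
  refine ⟨n, ?_, by omega⟩
  rw [Set.mem_ofPred_eq, progression_eq, hp]

theorem continuous_of_vanishing_fwdDiff_is_polynomial_general [TopologicalSpace K] [T2Space K]
    [IsTopologicalSemiring K] (hdense : DenseRange ((↑) : ℚ → K)) (hf : Continuous f)
    (hvanish : ∀ N : ℕ, 0 < N → (fwdDiff (N : K)⁻¹)^[m] f = 0) :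
    ∃ p : K[X], p.degree < m ∧ ∀ x : K, f x = p.eval x := by
  obtain ⟨p, hdeg, hp⟩ :=
    exists_degree_lt_forall_apply_add_nsmul_eq_eval (hvanish 1 one_pos) 0
  have eq_on_nat (n : ℕ) : f n = p.eval (n : K) := by simpa using hp n
  have eq_on_rat (r : ℚ) : f r = p.eval (r : K) :=
    apply_ratCast_eq_eval_of_fwdDiff_iter_eq_zero (hvanish r.den r.den_pos) eq_on_nat
  exact ⟨p, hdeg, congrFun (hdense.equalizer hf p.continuous (funext eq_on_rat))⟩

end Field

/-- **Functions with vanishing `m`-th differences are polynomials.**  If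
`f : ℝ → ℝ` is continuous and `(Δ_h^m f)(x) = 0` for every `h > 0` and every
`x ∈ ℝ` (with `m ≥ 1`), then `f` coincides with a real polynomial of degree at
most `m - 1`. -/
theorem continuous_of_vanishing_fwdDiff_is_polynomial
    (m : ℕ) (hm : 1 ≤ m) (f : ℝ → ℝ) (hf : Continuous f)
    (hvanish : ∀ h : ℝ, 0 < h → ∀ x : ℝ, (fwdDiffOp h)^[m] f x = 0) :
    ∃ p : Polynomial ℝ, p.natDegree ≤ m - 1 ∧ ∀ x : ℝ, f x = p.eval x := by
  obtain ⟨p, hdeg, hp⟩ := continuous_of_vanishing_fwdDiff_is_polynomial_general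
    Rat.denseRange_cast hf fun N hN => funext (hvanish _ (by positivity))
  exact ⟨p, natDegree_le_iff_coeff_eq_zero.mpr fun k hk =>
    (degree_lt_iff_coeff_zero p m).mp hdeg k (by omega), hp⟩
end
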